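/- Let X be a compact geodesic space, E a chained entourage in X, and c a closed curve in X. Then there exists a closed curve c̄ freely E-homotopic to c whose length equals the infimum of the lengths of all closed curves freely E-homotopic to c. Any such c̄ is non-constant if and only if c is not freely E-null, and if c̄ is non-constant then c̄ is a closed (3ε/2)-geodesic for every ε > 0 with E_ε ⊆ E. -/

import Mathlib

open Filter Metric Set
open scoped ENNReal NNReal Topology

variable {X : Type*} [MetricSpace X]

/-- The metric entourage of size `ε`: pairs at distance less than `ε`. -/
def MetricEnt (X : Type*) [MetricSpace X] (ε : ℝ) : Set (X × X) :=
  {p | dist p.1 p.2 < ε}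

/-- An entourage in a metric space: a symmetric subset of `X × X` containing some
metric entourage `E_ε`. -/
def IsEntourage (E : Set (X × X)) : Prop :=
  (∀ p : X × X, p ∈ E → (p.2, p.1) ∈ E) ∧ ∃ ε > 0, MetricEnt X ε ⊆ E

/-- The `E`-ball about `x`: `B(x,E) = {y | (x,y) ∈ E}`. -/
def EBall (E : Set (X × X)) (x : X) : Set X := {y | (x, y) ∈ E}

/-- An `E`-chain: a nonempty finite sequence of points with all consecutive pairs in `E`. -/
def IsEChain (E : Set (X × X)) (l : List X) : Prop :=
  l ≠ [] ∧ l.Chain' (fun a b => (a, b) ∈ E)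

/-- Concatenation of two chains sharing an endpoint (the last point of `α` should be the
first point of `β`). -/
def chainConc (α β : List X) : List X := α ++ β.tail

/-- The length `L(α)` of a chain: the sum of the distances between consecutive points. -/
noncomputable def chainLength : List X → ℝ
  | [] => 0
  | [_] => 0
  | a :: b :: rest => dist a b + chainLength (b :: rest)

/-- A basic move of an `E`-homotopy: inserting a point between two consecutive points
(legal when both new pairs lie in `E`), or removing an interior point (legal when the
resulting consecutive pair lies in `E`).  Endpoints are never changed. -/
inductive EStep (E : Set (X × X)) : List X → List X → Prop
  | insert (pre : List X) (a x b : X) (post : List X)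
      (h1 : (a, x) ∈ E) (h2 : (x, b) ∈ E) :
      EStep E (pre ++ a :: b :: post) (pre ++ a :: x :: b :: post)
  | remove (pre : List X) (a x b : X) (post : List X)
      (h : (a, b) ∈ E) :
      EStep E (pre ++ a :: x :: b :: post) (pre ++ a :: b :: post)

/-- Two chains are `E`-homotopic if one passes from one to the other by finitely many
basic moves. -/
def EHomotopic (E : Set (X × X)) : List X → List X → Prop :=
  Relation.ReflTransGen (EStep E)

/-- Two `E`-loops `l₁`, `l₂` are freely `E`-homotopic if there are `E`-chains `α`, `β`
from a common point to their respective basepoints such that the corresponding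
conjugated loops are `E`-homotopic. -/
def FreelyEHomotopic (E : Set (X × X)) (l₁ l₂ : List X) : Prop :=
  ∃ α β : List X, IsEChain E α ∧ IsEChain E β ∧ α.head? = β.head? ∧
    α.getLast? = l₁.head? ∧ β.getLast? = l₂.head? ∧
    EHomotopic E (chainConc (chainConc α l₁) α.reverse)
      (chainConc (chainConc β l₂) β.reverse)

/-- A subset `A` is chain connected if for every `δ > 0` any two points of `A` are joined
by a `δ`-chain lying in `A`. -/
def ChainConnected (A : Set X) : Prop :=
  ∀ δ > 0, ∀ x ∈ A, ∀ y ∈ A, ∃ l : List X, IsEChain (MetricEnt X δ) l ∧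
    (∀ z ∈ l, z ∈ A) ∧ l.head? = some x ∧ l.getLast? = some y

/-- A chained entourage: an entourage contained in the closure of its interior, this
closure being compact if the space is not, such that any pair `(x,y) ∈ E` may be joined
by arbitrarily fine chains inside `B(x,E) ∩ B(y,E)`. -/
def IsChained (E : Set (X × X)) : Prop :=
  IsEntourage E ∧ E ⊆ closure (interior E) ∧
  (¬ CompactSpace X → IsCompact (closure (interior E))) ∧
  ∀ p ∈ E, ∀ δ > 0, ∃ l : List X, IsEChain (MetricEnt X δ) l ∧
    l.head? = some p.1 ∧ l.getLast? = some p.2 ∧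
    ∀ z ∈ l, z ∈ EBall E p.1 ∩ EBall E p.2

/-- An `F`-refinement of a `D`-chain: between each pair of consecutive points `x`, `y` of
the original chain insert an `F`-chain from `x` to `y` lying in `B(x,D) ∩ B(y,D)`. -/
inductive IsRefinement (D F : Set (X × X)) : List X → List X → Prop
  | single (x : X) : IsRefinement D F [x] [x]
  | cons (x y : X) (seg rest refRest : List X)
      (hseg : IsEChain F (x :: (seg ++ [y])))
      (hin : ∀ z ∈ x :: (seg ++ [y]), z ∈ EBall D x ∩ EBall D y)
      (hrest : IsRefinement D F (y :: rest) refRest) :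
      IsRefinement D F (x :: y :: rest) (x :: (seg ++ refRest))

/-- An `E`-subdivision of a curve `c` (regarded on `[0,1]`): an `E`-chain
`{c(t₀),…,c(tₙ)}` with `0 = t₀ ≤ ⋯ ≤ tₙ = 1` such that the restriction of `c` to each
`[tᵢ,tᵢ₊₁]` lies in `B(c(tᵢ),E) ∩ B(c(tᵢ₊₁),E)`. -/
def IsSubdivision (E : Set (X × X)) (c : ℝ → X) (l : List X) : Prop :=
  ∃ ts : List ℝ, ts.head? = some 0 ∧ ts.getLast? = some 1 ∧
    l = ts.map c ∧ IsEChain E l ∧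
    ts.Chain' (fun a b => a ≤ b ∧ ∀ s, a ≤ s → s ≤ b →
      c s ∈ EBall E (c a) ∩ EBall E (c b))

/-- `c` is a stringing of the chain `l` iff `c` is a curve on `[0,1]` of which `l` is an
`E`-subdivision. -/
def IsStringing (E : Set (X × X)) (l : List X) (c : ℝ → X) : Prop :=
  ContinuousOn c (Set.Icc 0 1) ∧ IsSubdivision E c l

/-- Two curves with the same endpoints are `E`-homotopic if they admit `E`-homotopic
`E`-subdivisions. -/
def CurveEHomotopic (E : Set (X × X)) (c₁ c₂ : ℝ → X) : Prop :=
  ∃ l₁ l₂ : List X, IsSubdivision E c₁ l₁ ∧ IsSubdivision E c₂ l₂ ∧ EHomotopic E l₁ l₂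

/-- Two closed curves are freely `E`-homotopic if they admit freely `E`-homotopic
`E`-subdivisions. -/
def CurveFreelyEHomotopic (E : Set (X × X)) (c₁ c₂ : ℝ → X) : Prop :=
  ∃ l₁ l₂ : List X, IsSubdivision E c₁ l₁ ∧ IsSubdivision E c₂ l₂ ∧ FreelyEHomotopic E l₁ l₂

/-- A `D`-small loop: a `D`-loop of the form `γ * τ * γ̄` where `τ` is a `D`-loop with
exactly three edges. -/
def IsSmallLoop (D : Set (X × X)) (l : List X) : Prop :=
  ∃ (γ : List X) (a b c : X), IsEChain D γ ∧ γ.getLast? = some a ∧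
    (a, b) ∈ D ∧ (b, c) ∈ D ∧ (c, a) ∈ D ∧
    l = chainConc (chainConc γ [a, b, c, a]) γ.reverse

/-- `C(X,ε)`: the minimal number of open `ε`-balls needed to cover `X`. -/
noncomputable def coveringNumber (X : Type*) [MetricSpace X] (ε : ℝ) : ℕ :=
  sInf {n : ℕ | ∃ s : Finset X, s.card = n ∧ (⋃ x ∈ s, Metric.ball x ε) = Set.univ}

/-- A geodesic space: any two points are joined by a curve whose length (total
variation) equals the distance between them. -/
def IsGeodesicSpace (X : Type*) [MetricSpace X] : Prop :=
  ∀ x y : X, ∃ f : ℝ → X, ContinuousOn f (Set.Icc 0 1) ∧ f 0 = x ∧ f 1 = y ∧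
    eVariationOn f (Set.Icc 0 1) = ENNReal.ofReal (dist x y)

/-- Fixed-endpoint path homotopy of two curves on `[0,1]`. -/
def PathHomotopicOn (f g : ℝ → X) : Prop :=
  ∃ H : ℝ × ℝ → X, ContinuousOn H (Set.Icc 0 1 ×ˢ Set.Icc 0 1) ∧
    (∀ t ∈ Set.Icc (0:ℝ) 1, H (0, t) = f t ∧ H (1, t) = g t) ∧
    (∀ s ∈ Set.Icc (0:ℝ) 1, H (s, 0) = f 0 ∧ H (s, 1) = f 1)

/-- Concatenation of a list of chains (each sharing its endpoint with the next). -/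
def concList : List (List X) → List X
  | [] => []
  | [l] => l
  | l :: l' :: ls => chainConc l (concList (l' :: ls))

/-- Concatenation of two curves on `[0,1]`. -/
noncomputable def concat2 (f g : ℝ → X) : ℝ → X :=
  fun t => if t ≤ 1 / 2 then f (2 * t) else g (2 * t - 1)

/-- Concatenation of a finite list of loops based at `p`. -/
noncomputable def concatLoops (p : X) : List (ℝ → X) → ℝ → X
  | [] => fun _ => p
  | [f] => f
  | f :: g :: fs => concat2 f (concatLoops p (g :: fs))

/-- A curve on `[0,1]` is parameterized proportional to arclength. -/
def PropToArclength (c : ℝ → X) : Prop :=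
  ∀ t ∈ Set.Icc (0:ℝ) 1, eVariationOn c (Set.Icc 0 t) =
    ENNReal.ofReal t * eVariationOn c (Set.Icc 0 1)

/-- A closed curve (parameterized on `[0,1]` proportional to arclength) is a closed
`κ`-geodesic if every subarc of its periodic extension of length at most `κ` has length
equal to the distance between its endpoints. -/
def IsClosedKGeodesic (c : ℝ → X) (κ : ℝ) : Prop :=
  c 0 = c 1 ∧
  ∀ s t : ℝ, s ≤ t →
    eVariationOn (fun u => c (Int.fract u)) (Set.Icc s t) ≤ ENNReal.ofReal κ →
    eVariationOn (fun u => c (Int.fract u)) (Set.Icc s t) =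
      ENNReal.ofReal (dist (c (Int.fract s)) (c (Int.fract t)))

/-!
Being freely `E`-homotopic is insensitive to small perturbations, so a closed curve may be replaced
by the broken geodesic through a fine enough subdivision of it, which is Lipschitz with constant at
most the length of the curve. Hence the infimum of the lengths in a free homotopy class is also the
infimum of the Lipschitz constants. Compactness yields a pointwise limit of curves whose Lipschitz
constants tend to that infimum; finitely many of its values determine its class, so it is still in
the class, and it is a shortest curve.

Let `L` be the length of a shortest curve and suppose `E_ε ⊆ E`. If `L < 3ε`, then three equidistant
points subdivide the curve, and such a triangle is null. Otherwise an arc of length at most `3ε/2`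
is at most half of the curve. If it were longer than the distance between its endpoints, a point on
it could be replaced by a point on the geodesic between the endpoints in such a way that all the
pairs involved in the exchange are `ε`-close. The exchange is a free homotopy and makes the curve
shorter, a contradiction.
-/

section Chains

variable {α : Type*} {E : Set (α × α)} {l l' l₁ l₂ l₃ A B : List α} {p q : α}

/-- An `E`-loop: an `E`-chain whose first and last points coincide. -/
def IsELoop (E : Set (α × α)) (l : List α) : Prop :=
  IsEChain E l ∧ l.head? = l.getLast?

theorem IsELoop.isChain (h : IsELoop E l) : l.IsChain fun x y => (x, y) ∈ E :=
  h.1.2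

theorem IsELoop.eq_concat (h : IsELoop E (p :: l)) : ∃ m, p :: l = m ++ [p] :=
  List.getLast?_eq_some_iff.1 h.2.symm

theorem IsELoop.conjugate_isChain [SetRel.IsSymm E] (h : IsELoop E (p :: l))
    (hA : (A ++ [p]).IsChain fun x y => (x, y) ∈ E) :
    (A ++ p :: l ++ A.reverse).IsChain fun x y => (x, y) ∈ E := by
  obtain ⟨m, hm⟩ := h.eq_concat
  have hArev : ([p] ++ A.reverse).IsChain fun x y => (x, y) ∈ E := by
    rw [← List.reverse_singleton, ← List.reverse_append, List.isChain_reverse]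
    exact hA.imp fun _ _ hxy => SetRel.symm E hxy
  have hAl : (A ++ p :: l).IsChain fun x y => (x, y) ∈ E := by
    simpa using hA.append_overlap (l₃ := l) h.isChain (List.cons_ne_nil _ _)
  rw [hm, ← List.append_assoc] at hAl ⊢
  exact hAl.append_overlap hArev (List.cons_ne_nil _ _)

theorem isChain_cons_of_head?_eq [SetRel.IsRefl E] (hp : l.head? = some p)
    (hl : l.IsChain fun x y => (x, y) ∈ E) : (p :: l).IsChain fun x y => (x, y) ∈ E :=
  List.isChain_cons.2 ⟨fun _ hy => Option.some.inj (hp.symm.trans hy) ▸ SetRel.rfl E, hl⟩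

namespace EStep

theorem append (h : EStep E l l') (A B : List α) : EStep E (A ++ l ++ B) (A ++ l' ++ B) := by
  cases h with
  | insert pre a x b post h₁ h₂ => simpa using EStep.insert (A ++ pre) a x b (post ++ B) h₁ h₂
  | remove pre a x b post h => simpa using EStep.remove (A ++ pre) a x b (post ++ B) h

theorem head?_eq (h : EStep E l l') : l.head? = l'.head? := by
  cases h <;> simp [List.head?_append]

theorem isChain (h : EStep E l l') (hl : l.IsChain fun x y => (x, y) ∈ E) :
    l'.IsChain fun x y => (x, y) ∈ E := by
  cases h with
  | insert pre a x b post h₁ h₂ =>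
    obtain ⟨hpre, -, hpost⟩ := List.isChain_append_cons_cons.1 hl
    exact List.isChain_append_cons_cons.2 ⟨hpre, h₁, hpost.cons_cons h₂⟩
  | remove pre a x b post h =>
    obtain ⟨hpre, -, hpost⟩ := List.isChain_append_cons_cons.1 hl
    exact List.isChain_append_cons_cons.2 ⟨hpre, h, (List.isChain_cons_cons.1 hpost).2⟩

theorem symm (h : EStep E l l') (hl : l.IsChain fun x y => (x, y) ∈ E) : EStep E l' l := by
  cases h with
  | insert pre a x b post h₁ h₂ =>
    exact .remove pre a x b post (List.isChain_append_cons_cons.1 hl).2.1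
  | remove pre a x b post h =>
    obtain ⟨-, hax, hpost⟩ := List.isChain_append_cons_cons.1 hl
    exact .insert pre a x b post hax (List.isChain_cons_cons.1 hpost).1

end EStep

namespace EHomotopic

theorem trans (h : EHomotopic E l₁ l₂) (h' : EHomotopic E l₂ l₃) : EHomotopic E l₁ l₃ :=
  Relation.ReflTransGen.trans h h'

theorem append (h : EHomotopic E l l') (A B : List α) :
    EHomotopic E (A ++ l ++ B) (A ++ l' ++ B) :=
  h.lift (A ++ · ++ B) fun _ _ hstep => hstep.append A B

theorem head?_eq (h : EHomotopic E l l') : l.head? = l'.head? := by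
  induction h with
  | refl => rfl
  | tail _ hstep ih => exact ih.trans hstep.head?_eq

theorem isChain (h : EHomotopic E l l') (hl : l.IsChain fun x y => (x, y) ∈ E) :
    l'.IsChain fun x y => (x, y) ∈ E := by
  induction h with
  | refl => exact hl
  | tail _ hstep ih => exact hstep.isChain ih

theorem symm (h : EHomotopic E l l') (hl : l.IsChain fun x y => (x, y) ∈ E) :
    EHomotopic E l' l := by
  induction h with
  | refl => exact .refl
  | tail h hstep ih => exact .head (hstep.symm (isChain h hl)) ih

theorem remove_duplicate (hl : l ≠ []) (hlp : (l ++ [p]).IsChain fun x y => (x, y) ∈ E) :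
    EHomotopic E (l ++ [p, p]) (l ++ [p]) := by
  obtain ⟨m, u, rfl⟩ := (List.eq_nil_or_concat' l).resolve_left hl
  rw [List.append_assoc] at hlp ⊢
  rw [List.append_assoc]
  exact .single (.remove m u p p [] (List.isChain_append_cons_cons.1 hlp).2.1)

theorem remove_spike [SetRel.IsRefl E] [SetRel.IsSymm E] (hl : l ≠ [])
    (hlp : (l ++ [p]).IsChain fun x y => (x, y) ∈ E)
    (hB : (B ++ [p]).IsChain fun x y => (x, y) ∈ E) :
    EHomotopic E (l ++ p :: B.reverse ++ B ++ [p]) (l ++ [p]) := by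
  induction B using List.reverseRecOn generalizing l p with
  | nil => simpa using remove_duplicate hl hlp
  | append_singleton B b ih =>
    rw [List.append_assoc] at hB
    obtain ⟨hBb, hbp, -⟩ := List.isChain_append_cons_cons.1 hB
    have hlpb : (l ++ [p] ++ [b]).IsChain fun x y => (x, y) ∈ E := by
      rw [List.append_assoc]
      exact List.isChain_append_cons_cons.2 ⟨hlp, SetRel.symm E hbp, .singleton b⟩
    have inner : EHomotopic E (l ++ p :: (B ++ [b]).reverse ++ (B ++ [b]) ++ [p])
        (l ++ [p, b, p]) := by
      simpa using (ih (by simp) hlpb hBb).append [] [p]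
    have outer : EHomotopic E (l ++ [p, b, p]) (l ++ [p, p]) :=
      .single (.remove l p b p [] (SetRel.rfl E))
    exact (inner.trans outer).trans (remove_duplicate hl hlp)

theorem remove_conjugate_spikes [SetRel.IsRefl E] [SetRel.IsSymm E]
    (hl : IsELoop E (p :: l)) (hA : A ≠ [])
    (hAp : (A ++ [p]).IsChain fun x y => (x, y) ∈ E)
    (hBp : (B ++ [p]).IsChain fun x y => (x, y) ∈ E) :
    EHomotopic E (A ++ p :: B.reverse ++ (B ++ p :: l ++ B.reverse) ++ (B ++ p :: A.reverse))
      (A ++ p :: l ++ A.reverse) := by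
  have left := (remove_spike hA hAp hBp).append []
    (l ++ B.reverse ++ (B ++ p :: A.reverse))
  obtain ⟨m, hm⟩ := hl.eq_concat
  have hAm : (A ++ m ++ [p]).IsChain fun x y => (x, y) ∈ E := by
    rw [List.append_assoc, ← hm]
    exact (hl.conjugate_isChain hAp).left_of_append
  have right := (remove_spike (by simp [hA]) hAm hBp).append [] A.reverse
  have hm' (C : List α) : p :: (l ++ C) = m ++ p :: C := by
    simpa using congrArg (· ++ C) hm
  exact trans (by simpa using left) (by simpa [hm'] using right)

end EHomotopic

/-! ### Free homotopies of loops -/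

theorem EHomotopic.freely (h : EHomotopic E l l') (hl : l ≠ []) :
    FreelyEHomotopic E l l' := by
  obtain ⟨p, w, rfl⟩ := List.exists_cons_of_ne_nil hl
  have hp : some p = l'.head? := h.head?_eq
  obtain ⟨v, rfl⟩ := List.head?_eq_some_iff.1 hp.symm
  exact ⟨[p], [p], ⟨by simp, .singleton p⟩, ⟨by simp, .singleton p⟩, rfl, rfl, rfl,
    by simpa [chainConc] using h⟩

namespace FreelyEHomotopic

theorem refl (hl : l ≠ []) : FreelyEHomotopic E l l :=
  EHomotopic.freely .refl hl

theorem cons_iff [SetRel.IsRefl E] {w v : List α} :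
    FreelyEHomotopic E (p :: w) (q :: v) ↔ ∃ a A B,
      (a :: A ++ [p]).IsChain (fun x y => (x, y) ∈ E) ∧
      (a :: B ++ [q]).IsChain (fun x y => (x, y) ∈ E) ∧
      EHomotopic E (a :: A ++ p :: w ++ (a :: A).reverse)
        (a :: B ++ q :: v ++ (a :: B).reverse) := by
  constructor
  · rintro ⟨γ, δ, hγ, hδ, hhead, hlastγ, hlastδ, h⟩
    obtain ⟨A, rfl⟩ := List.getLast?_eq_some_iff.1 hlastγ
    obtain ⟨B, rfl⟩ := List.getLast?_eq_some_iff.1 hlastδ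
    obtain ⟨a, hA⟩ := Option.isSome_iff_exists.1 (List.isSome_head?.2 hγ.1)
    have hB : (B ++ [q]).head? = some a := hhead.symm.trans hA
    -- Doubling the common initial point makes both conjugating chains nondegenerate.
    refine ⟨a, A, B, isChain_cons_of_head?_eq hA hγ.2, isChain_cons_of_head?_eq hB hδ.2, ?_⟩
    simpa [chainConc] using h.append [a] [a]
  · rintro ⟨a, A, B, hA, hB, h⟩
    exact ⟨a :: A ++ [p], a :: B ++ [q], ⟨by simp, hA⟩, ⟨by simp, hB⟩, rfl,
      List.getLast?_concat, List.getLast?_concat, by simpa [chainConc] using h⟩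

theorem symm [SetRel.IsRefl E] [SetRel.IsSymm E] (h : FreelyEHomotopic E l l')
    (hl : IsELoop E l) (hl' : l' ≠ []) : FreelyEHomotopic E l' l := by
  obtain ⟨p, w, rfl⟩ := List.exists_cons_of_ne_nil hl.1.1
  obtain ⟨q, v, rfl⟩ := List.exists_cons_of_ne_nil hl'
  obtain ⟨a, A, B, hA, hB, h⟩ := cons_iff.1 h
  exact cons_iff.2 ⟨a, B, A, hB, hA, h.symm (hl.conjugate_isChain hA)⟩

theorem trans [SetRel.IsRefl E] [SetRel.IsSymm E] (h : FreelyEHomotopic E l₁ l₂)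
    (h' : FreelyEHomotopic E l₂ l₃) (hl₁ : l₁ ≠ []) (hl₂ : IsELoop E l₂) (hl₃ : l₃ ≠ []) :
    FreelyEHomotopic E l₁ l₃ := by
  obtain ⟨p, w, rfl⟩ := List.exists_cons_of_ne_nil hl₁
  obtain ⟨q, v, rfl⟩ := List.exists_cons_of_ne_nil hl₂.1.1
  obtain ⟨r, z, rfl⟩ := List.exists_cons_of_ne_nil hl₃
  obtain ⟨a, A, B, hA, hB, h⟩ := cons_iff.1 h
  obtain ⟨c, C, D, hC, hD, h'⟩ := cons_iff.1 h'
  have hBrev : (q :: (a :: B).reverse).IsChain fun x y => (x, y) ∈ E := by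
    rw [← List.reverse_concat, List.isChain_reverse]
    exact hB.imp fun _ _ hxy => SetRel.symm E hxy
  have hconj : (c :: C ++ q :: (a :: B).reverse ++ a :: A ++ [p]).IsChain
      fun x y => (x, y) ∈ E := by
    have hCB := hC.append_overlap (l₂ := [q]) (l₃ := (a :: B).reverse) hBrev
      (List.cons_ne_nil _ _)
    have haA := isChain_cons_of_head?_eq rfl hA
    rw [List.reverse_cons, ← List.append_assoc] at hCB
    simpa using hCB.append_overlap (l₂ := [a]) haA (List.cons_ne_nil _ _)
  refine cons_iff.2 ⟨c, C ++ q :: (a :: B).reverse ++ a :: A, D, hconj, hD, ?_⟩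
  have middle := h.append (c :: C ++ q :: (a :: B).reverse) (a :: B ++ q :: (c :: C).reverse)
  have spikes := EHomotopic.remove_conjugate_spikes hl₂ (List.cons_ne_nil c C) hC hB
  have := (middle.trans spikes).trans h'
  simpa using this

theorem concat_last [SetRel.IsRefl E] (hl : IsELoop E (p :: l)) :
    FreelyEHomotopic E (p :: l ++ [p]) (p :: l) := by
  obtain ⟨m, hm⟩ := hl.eq_concat
  refine cons_iff.2 ⟨p, [], [], ?_, ?_, ?_⟩
  · simp [SetRel.rfl E]
  · simp [SetRel.rfl E]
  · have hpl := isChain_cons_of_head?_eq rfl hl.isChain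
    have hm' (C : List α) : p :: (l ++ C) = m ++ p :: C := by simpa using congrArg (· ++ C) hm
    rw [hm] at hpl
    simpa [hm'] using (EHomotopic.remove_duplicate (List.cons_ne_nil p m) hpl).append [] [p]

end FreelyEHomotopic

end Chains

section Curves

variable {α ι : Type*} {E : Set (α × α)} {l l' : List α} {f g c : ℝ → α}

theorem EHomotopic.ladder {f g : ι → α} {u p : α} {a : ι} {ts : List ι}
    (hua : (u, f a) ∈ E) (hap : (f ((a :: ts).getLast (by simp)), p) ∈ E)
    (hts : (a :: ts).IsChain fun s t => (f s, f t) ∈ E ∧ (f s, g t) ∈ E)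
    (hfg : ∀ t ∈ a :: ts, (f t, g t) ∈ E) :
    EHomotopic E (u :: (a :: ts).map g ++ [p]) (u :: (a :: ts).map f ++ [p]) := by
  have insert_fa (l : List α) : EStep E (u :: g a :: l) (u :: f a :: g a :: l) :=
    .insert [] u (f a) (g a) l hua (hfg a (by simp))
  induction ts generalizing a u with
  | nil => exact .tail (.single (insert_fa [p])) (.remove [u] (f a) (g a) p [] hap)
  | cons b ts ih =>
    obtain ⟨hab, hts⟩ := List.isChain_cons_cons.1 hts
    have remove_ga : EStep E (u :: f a :: g a :: ((b :: ts).map g ++ [p]))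
        (u :: f a :: ((b :: ts).map g ++ [p])) :=
      .remove [u] (f a) (g a) (g b) (ts.map g ++ [p]) hab.2
    have rest := ih hab.1 (by simpa using hap) hts (fun t ht => hfg t (by simp [ht]))
      (fun l => .insert [] (f a) (f b) (g b) l hab.1 (hfg b (by simp)))
    exact (EHomotopic.trans (.head (insert_fa _) (.single remove_ga))
      (by simpa using rest.append [u] []))

theorem FreelyEHomotopic.map_map [SetRel.IsRefl E] {f g : ι → α} {ts : List ι} (hne : ts ≠ [])
    (hf : (ts.map f).head? = (ts.map f).getLast?)
    (hts : ts.IsChain fun s t => (f s, f t) ∈ E ∧ (f s, g t) ∈ E)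
    (hfg : ∀ t ∈ ts, (f t, g t) ∈ E) :
    FreelyEHomotopic E (ts.map g) (ts.map f) := by
  obtain ⟨a, ts, rfl⟩ := List.exists_cons_of_ne_nil hne
  have hlast : f a = f ((a :: ts).getLast (by simp)) := by
    rw [List.head?_map, List.getLast?_map, List.getLast?_eq_some_getLast hne] at hf
    exact Option.some.inj hf
  exact cons_iff.2 ⟨f a, [], [], by simpa using hfg a (by simp), by simp [SetRel.rfl E],
    EHomotopic.ladder (SetRel.rfl E) (hlast ▸ SetRel.rfl E) hts hfg⟩

/-! ### Subdivisions of curves -/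

/-- `[s, t]` is an admissible step of an `E`-subdivision of `f`: a nonempty interval on which `f`
stays `E`-close to both of its endpoint values. -/
def IsSubdivisionStep (E : Set (α × α)) (f : ℝ → α) (s t : ℝ) : Prop :=
  s ≤ t ∧ ∀ r, s ≤ r → r ≤ t → f r ∈ EBall E (f s) ∩ EBall E (f t)

theorem mem_Icc_of_isChain_le {ts : List ℝ} {a b t : ℝ} (hts : ts.IsChain (· ≤ ·))
    (ha : ts.head? = some a) (hb : ts.getLast? = some b) (ht : t ∈ ts) : t ∈ Icc a b := by
  obtain ⟨l, rfl⟩ := List.head?_eq_some_iff.1 ha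
  obtain ⟨m, hm⟩ := List.getLast?_eq_some_iff.1 hb
  have hsorted := List.isChain_iff_pairwise.1 hts
  refine ⟨?_, ?_⟩
  · rcases List.mem_cons.1 ht with rfl | ht
    exacts [le_rfl, List.rel_of_pairwise_cons hsorted ht]
  · rw [hm] at ht hsorted
    rcases List.mem_append.1 ht with ht | ht
    exacts [(List.pairwise_append.1 hsorted).2.2 t ht b (by simp), (List.mem_singleton.1 ht).le]

namespace IsSubdivision

theorem of_isChain {ts : List ℝ} (h₀ : ts.head? = some 0) (h₁ : ts.getLast? = some 1)
    (hts : ts.IsChain (IsSubdivisionStep E f)) : IsSubdivision E f (ts.map f) := by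
  refine ⟨ts, h₀, h₁, rfl, ⟨?_, ?_⟩, hts⟩
  · rintro h
    simp_all
  · exact List.isChain_map_of_isChain f (fun s t hst => (hst.2 t hst.1 le_rfl).1) hts

theorem ne_nil (h : IsSubdivision E f l) : l ≠ [] := by
  obtain ⟨-, -, -, -, hl, -⟩ := h
  exact hl.1

theorem head?_eq (h : IsSubdivision E f l) : l.head? = some (f 0) := by
  obtain ⟨ts, h₀, -, rfl, -⟩ := h
  simp [h₀]

theorem getLast?_eq (h : IsSubdivision E f l) : l.getLast? = some (f 1) := by
  obtain ⟨ts, -, h₁, rfl, -⟩ := h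
  simp [h₁]

theorem isELoop (h : IsSubdivision E f l) (hf : f 0 = f 1) : IsELoop E l := by
  obtain ⟨-, -, -, -, hl, -⟩ := id h
  exact ⟨hl, by rw [h.head?_eq, h.getLast?_eq, hf]⟩

theorem congr (h : IsSubdivision E f l) (hfg : EqOn f g (Icc 0 1)) : IsSubdivision E g l := by
  obtain ⟨ts, h₀, h₁, rfl, hl, hts⟩ := h
  have hmem : ∀ t ∈ ts, t ∈ Icc (0 : ℝ) 1 := fun t ht =>
    mem_Icc_of_isChain_le (hts.imp fun _ _ h => h.1) h₀ h₁ ht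
  refine ⟨ts, h₀, h₁, List.map_congr_left fun t ht => hfg (hmem t ht), hl, ?_⟩
  refine List.IsChain.imp_of_mem_imp (fun s t hs ht hst => ⟨hst.1, fun r hsr hrt => ?_⟩) hts
  have hr : r ∈ Icc (0 : ℝ) 1 := ⟨(hmem s hs).1.trans hsr, hrt.trans (hmem t ht).2⟩
  rw [← hfg (hmem s hs), ← hfg (hmem t ht), ← hfg hr]
  exact hst.2 r hsr hrt

theorem mono {F : Set (α × α)} (h : IsSubdivision E f l) (hEF : E ⊆ F) : IsSubdivision F f l := by
  obtain ⟨ts, h₀, h₁, rfl, -, hts⟩ := h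
  exact of_isChain h₀ h₁ (hts.imp fun s t hst =>
    ⟨hst.1, fun r hsr hrt => (hst.2 r hsr hrt).imp (hEF ·) (hEF ·)⟩)

theorem exists_eq_map (h : IsSubdivision E f l) : ∃ ts : List ℝ, l = (0 :: (ts ++ [1])).map f ∧
    (0 :: (ts ++ [1])).IsChain (IsSubdivisionStep E f) := by
  obtain ⟨ts, h₀, h₁, rfl, -, hts⟩ := h
  obtain ⟨m, rfl⟩ := List.head?_eq_some_iff.1 h₀
  rcases List.eq_nil_or_concat' m with rfl | ⟨m, z, rfl⟩
  · simp at h₁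
  · obtain rfl : z = 1 := by
      simpa using (List.getLast?_concat (l := 0 :: m)).symm.trans h₁
    exact ⟨m, rfl, hts⟩

end IsSubdivision

/-- One-sided form of `IsSubdivisionStep`, which, unlike it, survives moving the left end. -/
def IsRightStep (E : Set (α × α)) (f : ℝ → α) (s t : ℝ) : Prop :=
  s ≤ t ∧ ∀ r ∈ Icc s t, (f r, f t) ∈ E

theorem IsRightStep.mono_left {s s' t : ℝ} (h : IsRightStep E f s t) (hs : s ≤ s') (ht : s' ≤ t) :
    IsRightStep E f s' t :=
  ⟨ht, fun r hr => h.2 r ⟨hs.trans hr.1, hr.2⟩⟩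

theorem IsRightStep.edge {s t : ℝ} (h : IsRightStep E f s t) : (f s, f t) ∈ E :=
  h.2 s (left_mem_Icc.2 h.1)

theorem IsRightStep.insert_time {u s t : ℝ} {ts : List ℝ} (hs : IsRightStep E f u s)
    (ht : IsRightStep E f u t) (hts : t ≤ s) :
    EStep E ((u :: s :: ts).map f) ((u :: t :: s :: ts).map f) :=
  .insert [] (f u) (f t) (f s) (ts.map f) ht.edge (hs.mono_left ht.1 hts).edge

theorem IsRightStep.remove_time {u s : ℝ} (hs : IsRightStep E f u s) (t : ℝ) (ts : List ℝ) :
    EStep E ((u :: t :: s :: ts).map f) ((u :: s :: ts).map f) :=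
  .remove [] (f u) (f t) (f s) (ts.map f) hs.edge

theorem EHomotopic.map_cons {u : ℝ} {ts ts' : List ℝ} (h : EHomotopic E (ts.map f) (ts'.map f)) :
    EHomotopic E ((u :: ts).map f) ((u :: ts').map f) := by
  simpa using h.append [f u] []

theorem le_of_isChain_isRightStep {t z : ℝ} {ts : List ℝ}
    (h : (t :: (ts ++ [z])).IsChain (IsRightStep E f)) : t ≤ z :=
  (mem_Icc_of_isChain_le (h.imp fun _ _ hst => hst.1) rfl
    (List.getLast?_concat (l := t :: ts)) (by simp : t ∈ t :: (ts ++ [z]))).2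

-- The smaller of the two second times can be inserted into the other chain; then both chains
-- start with the same step, which can be split off.
theorem EHomotopic.of_isRightStep {z : ℝ} : ∀ {u : ℝ} {ts ts' : List ℝ},
    (u :: (ts ++ [z])).IsChain (IsRightStep E f) → (u :: (ts' ++ [z])).IsChain (IsRightStep E f) →
    EHomotopic E ((u :: (ts ++ [z])).map f) ((u :: (ts' ++ [z])).map f)
  | _, [], [], _, _ => .refl
  | u, t :: ts, [], h, h' => by
    obtain ⟨hut, ht⟩ := List.isChain_cons_cons.1 h
    have huz := (List.isChain_cons_cons.1 h').1
    have hz := huz.mono_left hut.1 (le_of_isChain_isRightStep ht)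
    have rest := of_isRightStep (ts' := []) ht (.cons_cons hz (.singleton z))
    exact rest.map_cons.tail (huz.remove_time t [])
  | u, [], t' :: ts', h, h' => by
    obtain ⟨hut', ht'⟩ := List.isChain_cons_cons.1 h'
    have huz := (List.isChain_cons_cons.1 h).1
    have hz := huz.mono_left hut'.1 (le_of_isChain_isRightStep ht')
    have rest := of_isRightStep (ts := []) (.cons_cons hz (.singleton z)) ht'
    exact .head (huz.insert_time hut' hz.1) rest.map_cons
  | u, t :: ts, t' :: ts', h, h' => by
    obtain ⟨hut, ht⟩ := List.isChain_cons_cons.1 h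
    obtain ⟨hut', ht'⟩ := List.isChain_cons_cons.1 h'
    rcases le_total t t' with htt' | htt'
    · have rest := of_isRightStep (ts' := t' :: ts') ht
        (.cons_cons (hut'.mono_left hut.1 htt') ht')
      exact rest.map_cons.tail (hut'.remove_time t (ts' ++ [z]))
    · have rest := of_isRightStep (ts := t :: ts)
        (.cons_cons (hut.mono_left hut'.1 htt') ht) ht'
      exact .head (hut.insert_time hut' htt') rest.map_cons
termination_by _ ts ts' => ts.length + ts'.length

theorem IsSubdivision.eHomotopic [SetRel.IsSymm E] (h : IsSubdivision E f l)
    (h' : IsSubdivision E f l') : EHomotopic E l l' := by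
  obtain ⟨ts, rfl, hts⟩ := h.exists_eq_map
  obtain ⟨ts', rfl, hts'⟩ := h'.exists_eq_map
  have right {s t : ℝ} (hst : IsSubdivisionStep E f s t) : IsRightStep E f s t :=
    ⟨hst.1, fun r hr => SetRel.symm E (hst.2 r hr.1 hr.2).2⟩
  exact .of_isRightStep (hts.imp fun _ _ => right) (hts'.imp fun _ _ => right)

theorem eqOn_comp_fract (hf : f 0 = f 1) : EqOn f (fun t => f (Int.fract t)) (Icc 0 1) := by
  rintro t ⟨ht₀, ht₁⟩
  rcases ht₁.eq_or_lt with rfl | ht₁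
  · simp [hf]
  · simp [Int.fract_eq_self.2 ⟨ht₀, ht₁⟩]

theorem IsSubdivision.of_eqOn_const [SetRel.IsRefl E] {x : α} (hf : ∀ t ∈ Icc (0 : ℝ) 1, f t = x) :
    IsSubdivision E f [x, x] := by
  refine IsSubdivision.congr (f := fun _ => x) (l := [0, 1].map fun _ : ℝ => x)
    (.of_isChain rfl rfl ?_) fun t ht => (hf t ht).symm
  simp [IsSubdivisionStep, EBall, SetRel.rfl E]

/-! ### Free homotopies of closed curves -/

namespace CurveFreelyEHomotopic

theorem refl (h : IsSubdivision E f l) : CurveFreelyEHomotopic E f f :=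
  ⟨l, l, h, h, .refl h.ne_nil⟩

theorem congr_left (h : CurveFreelyEHomotopic E f c) (hfg : EqOn f g (Icc 0 1)) :
    CurveFreelyEHomotopic E g c := by
  obtain ⟨l, l', hl, hl', h⟩ := h
  exact ⟨l, l', hl.congr hfg, hl', h⟩

variable [SetRel.IsRefl E] [SetRel.IsSymm E]

theorem symm (h : CurveFreelyEHomotopic E f g) (hf : f 0 = f 1) :
    CurveFreelyEHomotopic E g f := by
  obtain ⟨l, l', hl, hl', h⟩ := h
  exact ⟨l', l, hl', hl, h.symm (hl.isELoop hf) hl'.ne_nil⟩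

theorem freelyEHomotopic (h : CurveFreelyEHomotopic E f g) (hf : f 0 = f 1) (hg : g 0 = g 1)
    (hl : IsSubdivision E f l) (hl' : IsSubdivision E g l') : FreelyEHomotopic E l l' := by
  obtain ⟨m, m', hm, hm', h⟩ := h
  have hlm := (hl.eHomotopic hm).freely hl.ne_nil
  have hml' := (hm'.eHomotopic hl').freely hm'.ne_nil
  exact (hlm.trans h hl.ne_nil (hm.isELoop hf) hm'.ne_nil).trans hml' hl.ne_nil (hm'.isELoop hg)
    hl'.ne_nil

theorem trans (h : CurveFreelyEHomotopic E f g) (h' : CurveFreelyEHomotopic E g c)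
    (hg : g 0 = g 1) (hc : c 0 = c 1) : CurveFreelyEHomotopic E f c := by
  obtain ⟨l, m, hl, hm, h⟩ := h
  obtain ⟨-, l', -, hl', -⟩ := id h'
  have := h'.freelyEHomotopic hg hc hm hl'
  exact ⟨l, l', hl, hl', h.trans this hl.ne_nil (hm.isELoop hg) hl'.ne_nil⟩

end CurveFreelyEHomotopic

/-- A closed curve is freely `E`-null if some `E`-subdivision of it is freely `E`-homotopic to a
one-point chain. -/
def IsFreelyENull (E : Set (α × α)) (c : ℝ → α) : Prop :=
  ∃ l : List α, IsSubdivision E c l ∧ ∃ x : α, FreelyEHomotopic E l [x]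

theorem isFreelyENull_iff [SetRel.IsRefl E] [SetRel.IsSymm E] (hc : c 0 = c 1) :
    IsFreelyENull E c ↔ ∃ x, CurveFreelyEHomotopic E (fun _ => x) c := by
  have hsub (x : α) : IsSubdivision E (fun _ => x) [x, x] := .of_eqOn_const fun _ _ => rfl
  have hpoint (x : α) : IsELoop E [x] := ⟨⟨by simp, .singleton x⟩, rfl⟩
  have hdup (x : α) : FreelyEHomotopic E [x, x] [x] := .concat_last (hpoint x)
  constructor
  · rintro ⟨l, hl, x, h⟩
    have h' := h.symm (hl.isELoop hc) (by simp)
    exact ⟨x, [x, x], l, hsub x, hl, (hdup x).trans h' (by simp) (hpoint x) hl.ne_nil⟩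
  · rintro ⟨x, h⟩
    obtain ⟨-, l, -, hl, -⟩ := id h
    have h' := (h.freelyEHomotopic rfl hc (hsub x) hl).symm ((hsub x).isELoop rfl) hl.ne_nil
    exact ⟨l, hl, x, h'.trans (hdup x) hl.ne_nil ((hsub x).isELoop rfl) (by simp)⟩

end Curves

section RealCurves

/-! ### Length and Lipschitz constants -/

variable {Y : Type*} {f g : ℝ → Y} {K : ℝ≥0} {S : Set ℝ} {a b : ℝ}

section EMetric

variable [PseudoEMetricSpace Y]

theorem eVariationOn_Icc_add_Icc (f : ℝ → Y) {a b c : ℝ} (hab : a ≤ b) (hbc : b ≤ c) :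
    eVariationOn f (Icc a b) + eVariationOn f (Icc b c) = eVariationOn f (Icc a c) := by
  simpa using eVariationOn.Icc_add_Icc f (s := univ) hab hbc (mem_univ b)

theorem edist_le_eVariationOn_Icc (f : ℝ → Y) (hab : a ≤ b) :
    edist (f a) (f b) ≤ eVariationOn f (Icc a b) :=
  eVariationOn.edist_le f (left_mem_Icc.2 hab) (right_mem_Icc.2 hab)

theorem eVariationOn_le_of_lipschitzOnWith (hf : LipschitzOnWith K f (Icc a b)) (hab : a ≤ b) :
    eVariationOn f (Icc a b) ≤ K * ENNReal.ofReal (b - a) := by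
  have hid := (monotone_id.monotoneOn (Icc a b)).eVariationOn_eq (left_mem_Icc.2 hab)
    (right_mem_Icc.2 hab)
  rw [inter_self] at hid
  calc eVariationOn (f ∘ id) (Icc a b) ≤ K * eVariationOn id (Icc a b) :=
        hf.comp_eVariationOn_le (mapsTo_id _)
    _ = K * ENNReal.ofReal (b - a) := by rw [hid]; rfl

end EMetric

variable [PseudoMetricSpace Y]

theorem lipschitzOnWith_iff_forall_le :
    LipschitzOnWith K f S ↔ ∀ s ∈ S, ∀ t ∈ S, s ≤ t → dist (f s) (f t) ≤ K * (t - s) := by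
  refine ⟨fun hf s hs t ht hst => ?_, fun h => .of_dist_le_mul fun s hs t ht => ?_⟩
  · simpa [dist_comm s, Real.dist_eq, abs_of_nonneg (sub_nonneg.2 hst)] using
      hf.dist_le_mul s hs t ht
  rcases le_total s t with hst | hts
  · rw [dist_comm s, Real.dist_eq, abs_of_nonneg (sub_nonneg.2 hst)]
    exact h s hs t ht hst
  · rw [dist_comm, Real.dist_eq, abs_of_nonneg (sub_nonneg.2 hts)]
    exact h t ht s hs hts

theorem lipschitzWith_iff_forall_le :
    LipschitzWith K f ↔ ∀ s t, s ≤ t → dist (f s) (f t) ≤ K * (t - s) := by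
  rw [← lipschitzOnWith_univ, lipschitzOnWith_iff_forall_le]
  simp

theorem lipschitzWith_comp_const_add (hf : LipschitzWith K f) (d : ℝ) :
    LipschitzWith K fun t => f (d + t) :=
  LipschitzWith.of_dist_le_mul fun s t => by simpa using hf.dist_le_mul (d + s) (d + t)

theorem lipschitzWith_comp_mul (hf : LipschitzWith 1 f) (K : ℝ≥0) :
    LipschitzWith K fun t => f (K * t) := by
  refine LipschitzWith.of_dist_le_mul fun s t => ?_
  simpa [Real.dist_eq, ← mul_sub, abs_mul] using hf.dist_le_mul (K * s) (K * t)

theorem lipschitzWith_ite_le (hf : LipschitzWith K f) (hg : LipschitzWith K g) (h : f a = g a) :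
    LipschitzWith K fun t => if t ≤ a then f t else g t := by
  have across {s t : ℝ} (hs : s ≤ a) (ht : a ≤ t) : dist (f s) (g t) ≤ K * dist s t :=
    calc dist (f s) (g t) ≤ dist (f s) (f a) + dist (g a) (g t) := by
          simpa only [h] using dist_triangle (f s) (f a) (g t)
      _ ≤ K * dist s a + K * dist a t := add_le_add (hf.dist_le_mul s a) (hg.dist_le_mul a t)
      _ = K * dist s t := by
          rw [← mul_add, Real.dist_eq, Real.dist_eq, Real.dist_eq, abs_of_nonpos (by linarith),
            abs_of_nonpos (by linarith), abs_of_nonpos (by linarith)]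
          ring
  refine LipschitzWith.of_dist_le_mul fun s t => ?_
  split_ifs with hs ht ht
  · exact hf.dist_le_mul s t
  · exact across hs (not_le.1 ht).le
  · simpa only [dist_comm] using across ht (not_le.1 hs).le
  · exact hg.dist_le_mul s t

theorem lipschitzWith_comp_fract (hf : LipschitzOnWith K f (Icc 0 1)) (hf₀ : f 0 = f 1) :
    LipschitzWith K fun t => f (Int.fract t) := by
  have hfract (t : ℝ) : Int.fract t ∈ Icc (0 : ℝ) 1 :=
    ⟨Int.fract_nonneg t, (Int.fract_lt_one t).le⟩
  refine lipschitzWith_iff_forall_le.2 fun s t hst => ?_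
  rw [lipschitzOnWith_iff_forall_le] at hf
  have hs := Int.self_sub_floor s
  have ht := Int.self_sub_floor t
  rcases (Int.floor_mono hst).eq_or_lt with heq | hlt
  · rw [heq] at hs
    refine (hf _ (hfract s) _ (hfract t) (by linarith)).trans_eq ?_
    rw [← hs, ← ht, sub_sub_sub_cancel_right]
  · have hfloor : (⌊s⌋ : ℝ) + 1 ≤ ⌊t⌋ := by exact_mod_cast hlt
    have h₁ := hf _ (hfract s) _ (right_mem_Icc.2 zero_le_one) (hfract s).2
    have h₀ := hf _ (left_mem_Icc.2 zero_le_one) _ (hfract t) (hfract t).1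
    calc dist (f (Int.fract s)) (f (Int.fract t))
        ≤ K * (1 - Int.fract s) + K * (Int.fract t - 0) :=
          (dist_triangle _ (f 1) _).trans (add_le_add h₁ (hf₀ ▸ h₀))
      _ = K * (1 - Int.fract s + Int.fract t) := by ring
      _ ≤ K * (t - s) := by gcongr; linarith

end RealCurves

section Metric

variable {E : Set (X × X)} {ε δ a b : ℝ} {ts : List ℝ} {f : ℝ → X} {K : ℝ≥0}

/-! ### Fine partitions and lengths of chains -/

/-- A partition of `[a, b]` of mesh less than `δ`, encoded as its increasing list of times, in which
repetitions are allowed. -/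
def IsFinePartition (δ a b : ℝ) (ts : List ℝ) : Prop :=
  ts.head? = some a ∧ ts.getLast? = some b ∧ ts.IsChain fun s t => s ≤ t ∧ t - s < δ

namespace IsFinePartition

theorem mem_Icc (h : IsFinePartition δ a b ts) {t : ℝ} (ht : t ∈ ts) : t ∈ Icc a b :=
  mem_Icc_of_isChain_le (h.2.2.imp fun _ _ hst => hst.1) h.1 h.2.1 ht

theorem cons {c : ℝ} (h : IsFinePartition δ b c ts) (hab : a ≤ b) (hδ : b - a < δ) :
    IsFinePartition δ a c (a :: ts) := by
  obtain ⟨hhead, hlast, hts⟩ := h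
  obtain ⟨m, rfl⟩ := List.head?_eq_some_iff.1 hhead
  exact ⟨rfl, by rwa [List.getLast?_cons_cons], hts.cons_cons ⟨hab, hδ⟩⟩

theorem map_const_add (h : IsFinePartition δ a b ts) (d : ℝ) :
    IsFinePartition δ (d + a) (d + b) (ts.map (d + ·)) := by
  refine ⟨by simp [h.1], by simp [h.2.1], (List.isChain_map _).2 (h.2.2.imp ?_)⟩
  rintro s t ⟨hst, hδ⟩
  constructor <;> linarith

theorem exists_of_le (hδ : 0 < δ) (hab : a ≤ b) : ∃ ts, IsFinePartition δ a b ts := by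
  obtain ⟨n, hn⟩ := exists_nat_gt ((b - a) / (δ / 2))
  rw [div_lt_iff₀ (half_pos hδ)] at hn
  induction n generalizing a with
  | zero => exact absurd hn (by simpa using hab)
  | succ n ih =>
    rcases lt_or_ge (b - a) δ with hlt | hge
    · exact ⟨[a, b], rfl, rfl, by simp [hab, hlt]⟩
    · push_cast at hn
      obtain ⟨ts, hts⟩ := ih (a := a + δ / 2) (by linarith) (by linarith)
      exact ⟨a :: ts, hts.cons (by linarith) (by linarith)⟩

theorem isSubdivision (h : IsFinePartition δ 0 1 ts)
    (hf : ∀ s ∈ Icc (0 : ℝ) 1, ∀ t ∈ Icc (0 : ℝ) 1, dist s t < δ → dist (f s) (f t) < ε) :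
    IsSubdivision (MetricEnt X ε) f (ts.map f) := by
  refine .of_isChain h.1 h.2.1 (List.IsChain.imp_of_mem_imp ?_ h.2.2)
  rintro s t hs ht ⟨hst, hδ⟩
  refine ⟨hst, fun r hsr hrt => ?_⟩
  have hs := h.mem_Icc hs
  have ht := h.mem_Icc ht
  have hr : r ∈ Icc (0 : ℝ) 1 := ⟨hs.1.trans hsr, hrt.trans ht.2⟩
  refine ⟨hf s hs r hr ?_, hf t ht r hr ?_⟩ <;> rw [Real.dist_eq, abs_lt] <;>
    constructor <;> linarith

end IsFinePartition

theorem chainLength_nonneg : ∀ l : List X, 0 ≤ chainLength l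
  | [] => le_rfl
  | [_] => le_rfl
  | _ :: y :: l => add_nonneg dist_nonneg (chainLength_nonneg (y :: l))

theorem ofReal_chainLength_map_le (f : ℝ → X) (hts : ts.IsChain (· ≤ ·)) (ha : ts.head? = some a)
    (hb : ts.getLast? = some b) :
    ENNReal.ofReal (chainLength (ts.map f)) ≤ eVariationOn f (Icc a b) := by
  obtain ⟨ts, rfl⟩ := List.head?_eq_some_iff.1 ha
  induction ts generalizing a with
  | nil => simp [chainLength]
  | cons t ts ih =>
    obtain ⟨hat, hts'⟩ := List.isChain_cons_cons.1 hts
    rw [List.getLast?_cons_cons] at hb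
    have htb : t ≤ b := (mem_Icc_of_isChain_le hts' rfl hb (by simp)).2
    calc ENNReal.ofReal (chainLength ((a :: t :: ts).map f))
        = edist (f a) (f t) + ENNReal.ofReal (chainLength ((t :: ts).map f)) := by
          rw [edist_dist, ← ENNReal.ofReal_add dist_nonneg (chainLength_nonneg _)]
          rfl
      _ ≤ eVariationOn f (Icc a t) + eVariationOn f (Icc t b) :=
          add_le_add (edist_le_eVariationOn_Icc f hat) (ih hts' rfl hb)
      _ = eVariationOn f (Icc a b) := eVariationOn_Icc_add_Icc f hat htb

theorem chainLength_map_le_of_lipschitzWith (hf : LipschitzWith K f) (hts : ts.IsChain (· ≤ ·))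
    (ha : ts.head? = some a) (hb : ts.getLast? = some b) (hab : a ≤ b) :
    chainLength (ts.map f) ≤ K * (b - a) := by
  have hle := (ofReal_chainLength_map_le f hts ha hb).trans
    (eVariationOn_le_of_lipschitzOnWith hf.lipschitzOnWith hab)
  rwa [← ENNReal.ofReal_coe_nnreal, ← ENNReal.ofReal_mul K.coe_nonneg,
    ENNReal.ofReal_le_ofReal_iff (mul_nonneg K.coe_nonneg (sub_nonneg.2 hab))] at hle

theorem IsSubdivision.ofReal_chainLength_le {l : List X} (h : IsSubdivision E f l) :
    ENNReal.ofReal (chainLength l) ≤ eVariationOn f (Icc 0 1) := by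
  obtain ⟨ts, h₀, h₁, rfl, -, hts⟩ := h
  exact ofReal_chainLength_map_le f (hts.imp fun _ _ hst => hst.1) h₀ h₁

theorem exists_isSubdivision_of_continuousOn (hε : 0 < ε) (hf : ContinuousOn f (Icc 0 1)) :
    ∃ l, IsSubdivision (MetricEnt X ε) f l := by
  obtain ⟨δ, hδ, hfδ⟩ := Metric.uniformContinuousOn_iff.1
    (isCompact_Icc.uniformContinuousOn_of_continuous hf) ε hε
  obtain ⟨ts, hts⟩ := IsFinePartition.exists_of_le hδ zero_le_one
  exact ⟨_, hts.isSubdivision hfδ⟩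

/-! ### Parameterization proportional to arclength -/

theorem propToArclength_of_lipschitzWith (hf : LipschitzWith K f)
    (hK : eVariationOn f (Icc 0 1) = K) : PropToArclength f := by
  intro t ht
  have hle {s r : ℝ} (hsr : s ≤ r) :=
    eVariationOn_le_of_lipschitzOnWith (hf.lipschitzOnWith (s := Icc s r)) hsr
  have hsum := eVariationOn_Icc_add_Icc f ht.1 ht.2
  have hKsum : K * ENNReal.ofReal (t - 0) + K * ENNReal.ofReal (1 - t) = K := by
    rw [← mul_add, ← ENNReal.ofReal_add (by linarith [ht.1]) (by linarith [ht.2])]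
    simp
  have hge : K * ENNReal.ofReal (t - 0) ≤ eVariationOn f (Icc 0 t) := by
    refine ENNReal.le_of_add_le_add_right (a := K * ENNReal.ofReal (1 - t)) (by finiteness) ?_
    exact (hKsum.trans (hK.symm.trans hsum.symm)).le.trans (by gcongr; exact hle ht.2)
  rw [hK, mul_comm]
  simpa using le_antisymm (hle ht.1) hge

theorem PropToArclength.lipschitzOnWith (hf : PropToArclength f)
    (hK : eVariationOn f (Icc 0 1) = K) : LipschitzOnWith K f (Icc 0 1) := by
  refine lipschitzOnWith_iff_forall_le.2 fun s hs t ht hst => ?_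
  have hsum := eVariationOn_Icc_add_Icc f hs.1 hst
  rw [hf s hs, hf t ht, hK, ← add_sub_cancel s t, ENNReal.ofReal_add hs.1 (sub_nonneg.2 hst),
    add_mul, add_sub_cancel, ENNReal.add_right_inj (by finiteness)] at hsum
  have hle := edist_le_eVariationOn_Icc f hst
  rw [hsum, edist_dist, ← ENNReal.ofReal_coe_nnreal, ← ENNReal.ofReal_mul (sub_nonneg.2 hst),
    mul_comm] at hle
  exact (ENNReal.ofReal_le_ofReal_iff (mul_nonneg K.coe_nonneg (sub_nonneg.2 hst))).1 hle

/-! ### Stringing a chain -/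

theorem dist_le_dist_sub_dist (hf : eVariationOn f (Icc a b) = ENNReal.ofReal (dist (f a) (f b)))
    {s t : ℝ} (has : a ≤ s) (hst : s ≤ t) (htb : t ≤ b) :
    dist (f s) (f t) ≤ dist (f a) (f t) - dist (f a) (f s) := by
  have hchain := ofReal_chainLength_map_le f (ts := [a, s, t, b]) (b := b)
    (by simp [has, hst, htb]) rfl rfl
  rw [hf, ENNReal.ofReal_le_ofReal_iff dist_nonneg] at hchain
  simp only [List.map, chainLength] at hchain
  linarith [dist_triangle (f a) (f t) (f b)]

-- Along a geodesic the distance to the initial point is an arclength parameter.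
theorem IsGeodesicSpace.exists_lipschitzWith_one (hX : IsGeodesicSpace X) (p q : X) :
    ∃ g : ℝ → X, LipschitzWith 1 g ∧ g 0 = p ∧ g (dist p q) = q := by
  obtain ⟨f, hf, rfl, rfl, hlen⟩ := hX p q
  have hdist {s t : ℝ} (hs : s ∈ Icc (0 : ℝ) 1) (ht : t ∈ Icc (0 : ℝ) 1) :
      dist (f s) (f t) ≤ dist (dist (f 0) (f s)) (dist (f 0) (f t)) := by
    rw [Real.dist_eq]
    rcases le_total s t with hst | hts
    · rw [abs_sub_comm]
      exact (dist_le_dist_sub_dist hlen hs.1 hst ht.2).trans (le_abs_self _)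
    · rw [dist_comm]
      exact (dist_le_dist_sub_dist hlen ht.1 hts hs.2).trans (le_abs_self _)
  have hsurj : ∀ u : Icc 0 (dist (f 0) (f 1)), ∃ t ∈ Icc (0 : ℝ) 1, dist (f 0) (f t) = u := by
    have hcont : ContinuousOn (fun t => dist (f 0) (f t)) (Icc 0 1) :=
      continuous_dist.comp_continuousOn (continuousOn_const.prodMk hf)
    have := intermediate_value_Icc zero_le_one hcont
    rw [dist_self] at this
    exact fun u => this u.2
  choose τ hτ hτdist using hsurj
  have hd : 0 ≤ dist (f 0) (f 1) := dist_nonneg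
  refine ⟨fun u => f (τ (projIcc 0 _ hd u)), ?_, ?_, ?_⟩
  · refine LipschitzWith.of_dist_le_mul fun u v => (hdist (hτ _) (hτ _)).trans ?_
    rw [hτdist, hτdist]
    exact (LipschitzWith.projIcc hd).dist_le_mul u v
  · have := hτdist (projIcc 0 _ hd 0)
    rw [projIcc_left] at this
    simpa [projIcc_left, dist_comm] using (dist_eq_zero.1 this).symm
  · rw [← dist_le_zero]
    simpa [projIcc_right, hτdist] using
      hdist (hτ ⟨_, right_mem_Icc.2 hd⟩) (right_mem_Icc.2 zero_le_one)

theorem IsGeodesicSpace.exists_map_eq_chain (hX : IsGeodesicSpace X) {l : List X}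
    (hl : IsEChain (MetricEnt X ε) l) : ∃ (h : ℝ → X) (ts : List ℝ), LipschitzWith 1 h ∧
      IsFinePartition ε 0 (chainLength l) ts ∧ ts.map h = l := by
  obtain ⟨hne, hl⟩ := hl
  induction l with
  | nil => exact absurd rfl hne
  | cons x l ih =>
    rcases l with - | ⟨y, l⟩
    · exact ⟨fun _ => x, [0], LipschitzWith.const' x, ⟨rfl, rfl, .singleton 0⟩, rfl⟩
    obtain ⟨hxy, hl⟩ := List.isChain_cons_cons.1 hl
    obtain ⟨h, ts, hh, hts, hmap⟩ := ih (List.cons_ne_nil y l) hl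
    obtain ⟨g, hg, rfl, hgy⟩ := hX.exists_lipschitzWith_one x y
    set d := dist (g 0) y
    have hhy : h 0 = y := by
      obtain ⟨m, rfl⟩ := List.head?_eq_some_iff.1 hts.1
      exact (List.cons.inj hmap).1
    have hjoin : g d = h (-d + d) := by rw [neg_add_cancel, hhy, hgy]
    refine ⟨_, 0 :: ts.map (d + ·),
      lipschitzWith_ite_le hg (lipschitzWith_comp_const_add hh (-d)) hjoin, ?_, ?_⟩
    · have := hts.map_const_add d
      rw [add_zero] at this
      exact this.cons dist_nonneg (by simpa [MetricEnt] using hxy)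
    · rw [List.map_cons, List.map_map, ← hmap, if_pos dist_nonneg]
      refine congrArg _ (List.map_congr_left fun t ht => ?_)
      rcases (hts.mem_Icc ht).1.eq_or_lt with rfl | hpos
      · simpa [hhy] using hgy
      · simp [hpos.not_ge]

theorem isSubdivisionStep_of_lipschitzWith (hE : MetricEnt X ε ⊆ E) (hf : LipschitzWith K f)
    (hab : a ≤ b) (hε : K * (b - a) < ε) : IsSubdivisionStep E f a b := by
  refine ⟨hab, fun r har hrb => ⟨hE ((hf.dist_le_mul a r).trans_lt (lt_of_le_of_lt ?_ hε)),
    hE ((hf.dist_le_mul b r).trans_lt (lt_of_le_of_lt ?_ hε))⟩⟩ <;>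
    refine mul_le_mul_of_nonneg_left (abs_le.2 ?_) K.coe_nonneg <;> constructor <;> linarith

theorem IsGeodesicSpace.exists_isSubdivision (hX : IsGeodesicSpace X) (hε : 0 < ε)
    (hE : MetricEnt X ε ⊆ E) {l : List X} {p : X} (hl : IsEChain (MetricEnt X ε) l)
    (hp : l.getLast? = some p) :
    ∃ f : ℝ → X, LipschitzWith (chainLength l).toNNReal f ∧ IsSubdivision E f (l ++ [p]) := by
  obtain ⟨h, ts, hh, hts, hmap⟩ := hX.exists_map_eq_chain hl
  lift chainLength l to ℝ≥0 using chainLength_nonneg l with K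
  have hcancel {t : ℝ} (ht : t ∈ Icc 0 (K : ℝ)) : K * (t / K) = t := by
    rcases K.coe_nonneg.eq_or_lt with h0 | hpos
    · rw [← h0, Icc_self, mem_singleton_iff] at ht
      simp [ht]
    · exact mul_div_cancel₀ t hpos.ne'
  have hhK : h K = p := by
    rw [← hmap, List.getLast?_map, hts.2.1] at hp
    exact Option.some.inj hp
  have hf := lipschitzWith_comp_mul hh K
  have hl' : l ++ [p] = (ts.map (· / (K : ℝ)) ++ [1]).map fun t => h (K * t) := by
    rw [List.map_append, List.map_map, ← hmap]
    simpa [hhK] using fun t ht => (congrArg h (hcancel (hts.mem_Icc ht))).symm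
  rw [Real.toNNReal_coe, hl']
  refine ⟨_, hf, .of_isChain (by simp [hts.1]) (by simp)
    (List.isChain_append.2 ⟨(List.isChain_map _).2 ?_, .singleton 1, ?_⟩)⟩
  · refine List.IsChain.imp_of_mem_imp (fun s t hs ht hst => ?_) hts.2.2
    refine isSubdivisionStep_of_lipschitzWith hE hf
      (div_le_div_of_nonneg_right hst.1 K.coe_nonneg) ?_
    rw [mul_sub, hcancel (hts.mem_Icc hs), hcancel (hts.mem_Icc ht)]
    exact hst.2
  · have hend : IsSubdivisionStep E (fun t => h (K * t)) (K / K) 1 := by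
      refine isSubdivisionStep_of_lipschitzWith hE hf (div_self_le_one _) ?_
      rwa [mul_sub, hcancel (right_mem_Icc.2 K.coe_nonneg), mul_one, sub_self]
    simpa [hts.2.1] using hend

end Metric

section ShortestCurve

variable {E : Set (X × X)} {ε δ : ℝ} {ts : List ℝ} {f g c : ℝ → X} {l l' : List X} {K : ℝ≥0}

theorem IsEntourage.isSymm (hE : IsEntourage E) : SetRel.IsSymm E :=
  ⟨fun x y => hE.1 (x, y)⟩

theorem isRefl_of_metricEnt_subset (hε : 0 < ε) (hE : MetricEnt X ε ⊆ E) : SetRel.IsRefl E :=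
  ⟨fun x => hE (by simpa [MetricEnt] using hε)⟩

theorem IsGeodesicSpace.exists_curveFreelyEHomotopic [SetRel.IsRefl E] [SetRel.IsSymm E]
    (hX : IsGeodesicSpace X) (hε : 0 < ε) (hE : MetricEnt X ε ⊆ E)
    (hl : IsELoop (MetricEnt X ε) l) (hl' : IsSubdivision E f l')
    (h : FreelyEHomotopic E l l') :
    ∃ g, LipschitzWith (chainLength l).toNNReal g ∧ g 0 = g 1 ∧ CurveFreelyEHomotopic E g f := by
  obtain ⟨p, m, rfl⟩ := List.exists_cons_of_ne_nil hl.1.1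
  obtain ⟨g, hg, hsub⟩ := hX.exists_isSubdivision hε hE hl.1 hl.2.symm
  have h₀ : p = g 0 := Option.some.inj hsub.head?_eq
  have h₁ : p = g 1 := Option.some.inj ((List.getLast?_concat ..).symm.trans hsub.getLast?_eq)
  have hlE : IsELoop E (p :: m) := ⟨⟨hl.1.1, hl.1.2.imp fun _ _ hxy => hE hxy⟩, hl.2⟩
  exact ⟨g, hg, h₀.symm.trans h₁, p :: m ++ [p], l', hsub, hl',
    (FreelyEHomotopic.concat_last hlE).trans h (by simp) hlE hl'.ne_nil⟩

/-- The set of lengths of the closed curves freely `E`-homotopic to `c`. -/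
def freeClassLengths (E : Set (X × X)) (c : ℝ → X) : Set ℝ≥0∞ :=
  {L | ∃ f : ℝ → X, ContinuousOn f (Icc 0 1) ∧ f 0 = f 1 ∧ CurveFreelyEHomotopic E f c ∧
    eVariationOn f (Icc 0 1) = L}

/-- The set of Lipschitz constants of the closed curves freely `E`-homotopic to `c`. It has the same
infimum as `freeClassLengths E c`, and is closed when the space is compact. -/
def freeClassLipschitzConstants (E : Set (X × X)) (c : ℝ → X) : Set ℝ≥0 :=
  {K | ∃ g : ℝ → X, LipschitzWith K g ∧ g 0 = g 1 ∧ CurveFreelyEHomotopic E g c}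

theorem IsGeodesicSpace.exists_mem_freeClassLipschitzConstants_le [SetRel.IsSymm E]
    (hX : IsGeodesicSpace X) (hε : 0 < ε) (hE : MetricEnt X ε ⊆ E)
    (hf : ContinuousOn f (Icc 0 1)) (hf₀ : f 0 = f 1) (hc : c 0 = c 1)
    (h : CurveFreelyEHomotopic E f c) :
    ∃ K ∈ freeClassLipschitzConstants E c, K ≤ eVariationOn f (Icc 0 1) := by
  have := isRefl_of_metricEnt_subset hε hE
  obtain ⟨l, hl⟩ := exists_isSubdivision_of_continuousOn hε hf
  obtain ⟨g, hg, hg₀, hgf⟩ := hX.exists_curveFreelyEHomotopic hε hE (hl.isELoop hf₀) (hl.mono hE)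
    (.refl hl.ne_nil)
  exact ⟨_, ⟨g, hg, hg₀, hgf.trans h hf₀ hc⟩, hl.ofReal_chainLength_le⟩

theorem sInf_freeClassLengths_le (hK : K ∈ freeClassLipschitzConstants E c) :
    sInf (freeClassLengths E c) ≤ K := by
  obtain ⟨g, hg, hg₀, hgc⟩ := hK
  refine sInf_le_of_le ⟨g, hg.continuous.continuousOn, hg₀, hgc, rfl⟩ ?_
  simpa using eVariationOn_le_of_lipschitzOnWith hg.lipschitzOnWith zero_le_one

theorem IsGeodesicSpace.freeClassLipschitzConstants_nonempty [SetRel.IsSymm E]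
    (hX : IsGeodesicSpace X) (hε : 0 < ε) (hE : MetricEnt X ε ⊆ E)
    (hcont : ContinuousOn c (Icc 0 1)) (hc : c 0 = c 1) :
    (freeClassLipschitzConstants E c).Nonempty := by
  obtain ⟨l, hl⟩ := exists_isSubdivision_of_continuousOn hε hcont
  obtain ⟨K, hK, -⟩ := hX.exists_mem_freeClassLipschitzConstants_le hε hE hcont hc hc
    (.refl (hl.mono hE))
  exact ⟨K, hK⟩

/-! ### Compactness -/

theorem CurveFreelyEHomotopic.of_dist_lt [SetRel.IsRefl E] (hE : MetricEnt X ε ⊆ E)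
    (hf : LipschitzWith K f) (hg : LipschitzWith K g) (hf₀ : f 0 = f 1) (hδ : K * δ < ε / 2)
    (hts : IsFinePartition δ 0 1 ts) (hfg : ∀ t ∈ ts, dist (f t) (g t) < ε / 2) :
    CurveFreelyEHomotopic E g f := by
  have modulus {u : ℝ → X} (hu : LipschitzWith K u) {s t : ℝ} (hst : dist s t < δ) :
      dist (u s) (u t) < ε / 2 :=
    (hu.dist_le_mul s t).trans_lt
      ((mul_le_mul_of_nonneg_left hst.le K.coe_nonneg).trans_lt hδ)
  have hhalf {x y : X} (h : dist x y < ε / 2) : dist x y < ε := by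
    linarith [dist_nonneg.trans_lt h]
  have hsub {u : ℝ → X} (hu : LipschitzWith K u) : IsSubdivision E u (ts.map u) :=
    (hts.isSubdivision fun s _ t _ hst => hhalf (modulus hu hst)).mono hE
  refine ⟨_, _, hsub hg, hsub hf, .map_map ?_ ?_ ?_ ?_⟩
  · exact fun h => (hsub hf).ne_nil (by rw [h, List.map_nil])
  · rw [(hsub hf).head?_eq, (hsub hf).getLast?_eq, hf₀]
  · refine List.IsChain.imp_of_mem_imp (fun s t _ ht hst => ?_) hts.2.2
    have hdist : dist (f s) (f t) < ε / 2 :=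
      modulus hf (by rw [dist_comm, Real.dist_eq, abs_of_nonneg (sub_nonneg.2 hst.1)]; exact hst.2)
    exact ⟨hE (hhalf hdist), hE ((dist_triangle _ (f t) _).trans_lt (by linarith [hfg t ht]))⟩
  · exact fun t ht => hE (hhalf (hfg t ht))

-- An ultrafilter on Lipschitz constants that converges to `K` makes the corresponding curves
-- converge pointwise, and being close at finitely many times is enough for a free homotopy.
theorem isClosed_freeClassLipschitzConstants [CompactSpace X] [SetRel.IsSymm E] (hε : 0 < ε)
    (hE : MetricEnt X ε ⊆ E) (hc : c 0 = c 1) : IsClosed (freeClassLipschitzConstants E c) := by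
  have := isRefl_of_metricEnt_subset hε hE
  have : Nonempty X := ⟨c 0⟩
  refine isClosed_of_closure_subset fun K hK => ?_
  obtain ⟨U, hU, hUK⟩ := mem_closure_iff_ultrafilter.1 hK
  replace hU : ∀ᶠ k in (U : Filter ℝ≥0), k ∈ freeClassLipschitzConstants E c := hU
  replace hUK : Tendsto id (U : Filter ℝ≥0) (𝓝 K) := hUK
  choose! g hg hg₀ hgc using fun k (hk : k ∈ freeClassLipschitzConstants E c) => hk
  let G : ℝ → X := fun t => (U.map fun k => g k t).lim
  have hG (t : ℝ) : Tendsto (fun k => g k t) U (𝓝 (G t)) := Ultrafilter.le_nhds_lim _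
  have hGK : LipschitzWith K G := LipschitzWith.of_dist_le_mul fun s t =>
    le_of_tendsto_of_tendsto ((hG s).dist (hG t)) ((NNReal.tendsto_coe.2 hUK).mul_const _)
      (hU.mono fun k hk => (hg k hk).dist_le_mul s t)
  have hG₀ : G 0 = G 1 := tendsto_nhds_unique_of_eventuallyEq (hG 0) (hG 1) (hU.mono hg₀)
  obtain ⟨δ, hδ, hKδ⟩ : ∃ δ > 0, ((K + 1 : ℝ≥0) : ℝ) * δ < ε / 2 :=
    ⟨ε / 4 / (K + 1 : ℝ≥0), by positivity, by field_simp; norm_num⟩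
  obtain ⟨ts, hts⟩ := IsFinePartition.exists_of_le hδ zero_le_one
  have hclose : ∀ᶠ k in (U : Filter ℝ≥0), ∀ t ∈ ts, dist (g k t) (G t) < ε / 2 := by
    simpa using (eventually_all_finset ts.toFinset).2 fun t _ =>
      (hG t).eventually (ball_mem_nhds _ (half_pos hε))
  obtain ⟨k, hk, hkK, hkG⟩ :=
    (hU.and ((hUK.eventually_le_const (lt_add_one K)).and hclose)).exists
  have hGk := CurveFreelyEHomotopic.of_dist_lt hE ((hg k hk).weaken hkK)
    (hGK.weaken (lt_add_one K).le) (hg₀ k hk) hKδ hts hkG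
  exact ⟨G, hGK, hG₀, hGk.trans (hgc k hk) (hg₀ k hk) hc⟩

theorem IsGeodesicSpace.exists_propToArclength_eVariationOn_eq_sInf [CompactSpace X]
    [SetRel.IsSymm E] (hX : IsGeodesicSpace X) (hε : 0 < ε) (hE : MetricEnt X ε ⊆ E)
    (hcont : ContinuousOn c (Icc 0 1)) (hc : c 0 = c 1) :
    ∃ g : ℝ → X, ContinuousOn g (Icc 0 1) ∧ g 0 = g 1 ∧ PropToArclength g ∧
      CurveFreelyEHomotopic E g c ∧
      eVariationOn g (Icc 0 1) = sInf (freeClassLengths E c) := by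
  have hmem := (isClosed_freeClassLipschitzConstants hε hE hc).csInf_mem
    (hX.freeClassLipschitzConstants_nonempty hε hE hcont hc) (OrderBot.bddBelow _)
  obtain ⟨g, hg, hg₀, hgc⟩ := id hmem
  set K := sInf (freeClassLipschitzConstants E c)
  have hmin : K ≤ sInf (freeClassLengths E c) := by
    refine le_sInf ?_
    rintro - ⟨f, hf, hf₀, h, rfl⟩
    obtain ⟨K', hK', hle⟩ := hX.exists_mem_freeClassLipschitzConstants_le hε hE hf hf₀ hc h
    exact (ENNReal.coe_le_coe.2 (csInf_le (OrderBot.bddBelow _) hK')).trans hle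
  have hgcont : ContinuousOn g (Icc 0 1) := hg.continuous.continuousOn
  have hle : sInf (freeClassLengths E c) ≤ eVariationOn g (Icc 0 1) :=
    sInf_le ⟨g, hgcont, hg₀, hgc, rfl⟩
  have hgK : eVariationOn g (Icc 0 1) ≤ K := by
    simpa using eVariationOn_le_of_lipschitzOnWith hg.lipschitzOnWith zero_le_one
  exact ⟨g, hgcont, hg₀,
    propToArclength_of_lipschitzWith hg (le_antisymm hgK (hmin.trans hle)), hgc,
    le_antisymm (hgK.trans hmin) hle⟩

end ShortestCurve

section ClosedGeodesic

variable {E : Set (X × X)} {ε : ℝ} {f c : ℝ → X} {K : ℝ≥0}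

/-! ### Constant curves -/

theorem isFreelyENull_iff_forall_eq [SetRel.IsRefl E] [SetRel.IsSymm E] (hc : c 0 = c 1)
    (hf : CurveFreelyEHomotopic E f c)
    (hmin : eVariationOn f (Icc 0 1) = sInf (freeClassLengths E c)) :
    IsFreelyENull E c ↔ ∀ s ∈ Icc (0 : ℝ) 1, ∀ t ∈ Icc (0 : ℝ) 1, f s = f t := by
  rw [isFreelyENull_iff hc]
  constructor
  · rintro ⟨x, hx⟩
    have h₀ : (0 : ℝ≥0) ∈ freeClassLipschitzConstants E c := ⟨_, LipschitzWith.const x, rfl, hx⟩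
    have hzero : eVariationOn f (Icc 0 1) = 0 := by
      simpa [hmin] using sInf_freeClassLengths_le h₀
    exact fun s hs t ht => edist_eq_zero.1 ((eVariationOn.eq_zero_iff f).1 hzero s hs t ht)
  · exact fun h => ⟨f 0, hf.congr_left fun t ht => h t ht 0 (by simp)⟩

/-! ### Rotation of the base point -/

-- Nearby rotations are uniformly close, and `ℝ` is connected.
theorem CurveFreelyEHomotopic.rotate [SetRel.IsSymm E] (hε : 0 < ε) (hE : MetricEnt X ε ⊆ E)
    (hf : LipschitzWith K f) (hper : Function.Periodic f 1) (a b : ℝ) :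
    CurveFreelyEHomotopic E (fun t => f (a + t)) fun t => f (b + t) := by
  have := isRefl_of_metricEnt_subset hε hE
  have hclosed (a : ℝ) : f (a + 0) = f (a + 1) := by rw [add_zero, hper a]
  have hrot := lipschitzWith_comp_const_add hf
  obtain ⟨δ, hδ, hKδ⟩ : ∃ δ > 0, K * δ < ε / 2 :=
    exists_pos_mul_lt (half_pos hε) K
  obtain ⟨ts, hts⟩ := IsFinePartition.exists_of_le hδ zero_le_one
  refine @PreconnectedSpace.induction₂ ℝ _ _
    (fun a b => CurveFreelyEHomotopic E (fun t => f (a + t)) fun t => f (b + t)) ⟨?_⟩ ?_ ⟨?_⟩ a b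
  · exact fun a b h => h.symm (hclosed a)
  · intro a
    filter_upwards [ball_mem_nhds a hδ] with b hb
    refine .of_dist_lt hE (hrot b) (hrot a) (hclosed b) hKδ hts fun t _ => ?_
    refine (hf.dist_le_mul _ _).trans_lt (lt_of_le_of_lt ?_ hKδ)
    rw [dist_add_right]
    exact mul_le_mul_of_nonneg_left hb.le K.coe_nonneg
  · exact fun a b c h h' => h.trans h' (hclosed b) (hclosed c)

/-! ### Short curves -/

theorem isFreelyENull_of_lipschitzWith [SetRel.IsSymm E] (hE : MetricEnt X ε ⊆ E)
    (hf : LipschitzWith K f) (hf₀ : f 0 = f 1) (hK : K < 3 * ε) : IsFreelyENull E f := by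
  have hε : 0 < ε := by linarith [K.coe_nonneg]
  have := isRefl_of_metricEnt_subset hε hE
  have h₁ : IsSubdivisionStep E f 0 (1 / 3) :=
    isSubdivisionStep_of_lipschitzWith hE hf (by norm_num) (by linarith)
  have h₂ : IsSubdivisionStep E f (1 / 3) (2 / 3) :=
    isSubdivisionStep_of_lipschitzWith hE hf (by norm_num) (by linarith)
  have h₃ : IsSubdivisionStep E f (2 / 3) 1 :=
    isSubdivisionStep_of_lipschitzWith hE hf (by norm_num) (by linarith)
  have hsub : IsSubdivision E f [f 0, f (1 / 3), f (2 / 3), f 1] :=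
    .of_isChain (ts := [0, 1 / 3, 2 / 3, 1]) rfl rfl
      (.cons_cons h₁ (.cons_cons h₂ (.cons_cons h₃ (.singleton 1))))
  have hchord : (f 0, f (2 / 3)) ∈ E := hf₀ ▸ (h₃.2 _ le_rfl h₃.1).2
  have hcollapse : EHomotopic E [f 0, f (1 / 3), f (2 / 3), f 1] [f 0, f 0] := by
    rw [← hf₀]
    exact .head (.remove [] _ _ _ _ hchord) (.single (.remove [] _ _ _ [] (SetRel.rfl E)))
  have hpoint : IsSubdivision E (fun _ => f 0) [f 0, f 0] := .of_eqOn_const fun _ _ => rfl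
  exact (isFreelyENull_iff hf₀).2 ⟨f 0, CurveFreelyEHomotopic.symm
    ⟨_, _, hsub, hpoint, hcollapse.freely (by simp)⟩ hf₀⟩

/-! ### Short arcs -/

theorem IsGeodesicSpace.exists_detour (hX : IsGeodesicSpace X) (hf : LipschitzWith K f) {τ : ℝ}
    (hτ : 0 ≤ τ) (hτε : K * τ ≤ 3 * ε / 2) (hlt : dist (f 0) (f τ) < K * τ) :
    ∃ a ∈ Icc 0 τ, ∃ v, K * a < ε ∧ K * (τ - a) < ε ∧ dist (f 0) v < ε ∧ dist v (f τ) < ε ∧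
      dist (f a) v < ε ∧ dist (f 0) v + dist v (f τ) ≤ dist (f 0) (f τ) := by
  set d := dist (f 0) (f τ) with hd
  have hd₀ : 0 ≤ d := dist_nonneg
  rw [lipschitzWith_iff_forall_le] at hf
  have hK : 0 < (K : ℝ) := pos_of_mul_pos_left (hd₀.trans_lt hlt) hτ
  rcases lt_or_ge d ε with hdε | hdε
  · have hε := hd₀.trans_lt hdε
    have := hf 0 (τ / 2) (by linarith)
    refine ⟨τ / 2, ⟨by linarith, by linarith⟩, f 0, by linarith, by linarith, ?_, hdε, ?_, ?_⟩
    · simpa using hε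
    · rw [dist_comm]
      linarith
    · simp [hd]
  · obtain ⟨k, hk, hk₀, hkd⟩ := hX.exists_lipschitzWith_one (f 0) (f τ)
    rw [lipschitzWith_iff_forall_le, NNReal.coe_one] at hk
    obtain ⟨a, ha⟩ : ∃ a, K * a = (K * τ + d) / 3 := ⟨_, mul_div_cancel₀ _ hK.ne'⟩
    have haτ : a ≤ τ := le_of_mul_le_mul_left (by linarith) hK
    have ha₀ : 0 ≤ a := nonneg_of_mul_nonneg_right (by rw [ha]; linarith) hK
    have hv₀ := hk 0 (K * a) (by positivity)
    have hvd := hk (K * a) d (by linarith)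
    rw [hk₀] at hv₀
    rw [hkd] at hvd
    have hav := (dist_triangle (f a) (f τ) (k (K * a))).trans
      (add_le_add (hf a τ haτ) (dist_comm (f τ) _ ▸ hvd))
    refine ⟨a, ⟨ha₀, haτ⟩, k (K * a), ?_, ?_, ?_, ?_, ?_, ?_⟩ <;> linarith

-- Replacing the first arc of `f` by the two chords of `exists_detour` is a free `E`-homotopy.
theorem IsGeodesicSpace.exists_mem_freeClassLipschitzConstants_lt [SetRel.IsSymm E]
    (hX : IsGeodesicSpace X) (hε : 0 < ε) (hE : MetricEnt X ε ⊆ E) (hf : LipschitzWith K f)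
    (hf₀ : f 0 = f 1) {τ : ℝ} (hτ : τ ∈ Icc (0 : ℝ) 1) (hτε : K * τ ≤ 3 * ε / 2)
    (hlt : dist (f 0) (f τ) < K * τ) : ∃ K' ∈ freeClassLipschitzConstants E f, K' < K := by
  have := isRefl_of_metricEnt_subset hε hE
  obtain ⟨a, ha, v, hKa, hKaτ, hv₀, hvτ, hav, hdetour⟩ := hX.exists_detour hf hτ.1 hτε hlt
  obtain ⟨δ, hδ, hKδ⟩ : ∃ δ > 0, K * δ < ε := exists_pos_mul_lt hε K
  obtain ⟨ts, hts⟩ := IsFinePartition.exists_of_le hδ hτ.2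
  obtain ⟨rs, rfl⟩ := List.head?_eq_some_iff.1 hts.1
  have hsteps : (τ :: rs).IsChain (IsSubdivisionStep (MetricEnt X ε) f) := by
    refine hts.2.2.imp fun s t hst => isSubdivisionStep_of_lipschitzWith subset_rfl hf hst.1 ?_
    exact (mul_le_mul_of_nonneg_left hst.2.le K.coe_nonneg).trans_lt hKδ
  have hsub : IsSubdivision (MetricEnt X ε) f ((0 :: a :: τ :: rs).map f) := by
    refine .of_isChain rfl (by simpa using hts.2.1) (.cons_cons ?_ (.cons_cons ?_ hsteps))
    · exact isSubdivisionStep_of_lipschitzWith subset_rfl hf ha.1 (by simpa using hKa)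
    · exact isSubdivisionStep_of_lipschitzWith subset_rfl hf ha.2 hKaτ
  have hsplice : EHomotopic E ((0 :: a :: τ :: rs).map f) (f 0 :: v :: (τ :: rs).map f) :=
    .head (.insert [f 0] (f a) v (f τ) (rs.map f) (hE hav) (hE hvτ))
      (.single (.remove [] (f 0) (f a) v ((τ :: rs).map f) (hE hv₀)))
  have hloop : IsELoop (MetricEnt X ε) (f 0 :: v :: (τ :: rs).map f) := by
    refine ⟨⟨by simp, .cons_cons hv₀ (.cons_cons hvτ ?_)⟩, ?_⟩
    · exact (List.isChain_cons_cons.1 (List.isChain_cons_cons.1 (hsub.isELoop hf₀).1.2).2).2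
    · simpa using (hsub.isELoop hf₀).2
  obtain ⟨g, hg, hg₀, hgf⟩ := hX.exists_curveFreelyEHomotopic hε hE hloop (hsub.mono hE)
    ((hsplice.freely (by simp)).symm ((hsub.mono hE).isELoop hf₀) (by simp))
  refine ⟨_, ⟨g, hg, hg₀, hgf⟩, ?_⟩
  rw [← NNReal.coe_lt_coe, Real.coe_toNNReal _ (chainLength_nonneg _)]
  have htail := chainLength_map_le_of_lipschitzWith hf (hts.2.2.imp fun _ _ hst => hst.1) hts.1
    hts.2.1 hτ.2
  calc chainLength (f 0 :: v :: (τ :: rs).map f)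
      = dist (f 0) v + (dist v (f τ) + chainLength ((τ :: rs).map f)) := rfl
    _ < K := by linarith

/-! ### Local geodesics -/

-- A closed curve can be re-based at any point without leaving its free homotopy class.
theorem IsGeodesicSpace.dist_eq_of_forall_le [SetRel.IsSymm E] (hX : IsGeodesicSpace X)
    (hε : 0 < ε) (hE : MetricEnt X ε ⊆ E) (hf : LipschitzWith K f)
    (hper : Function.Periodic f 1) (hmin : ∀ K' ∈ freeClassLipschitzConstants E f, K ≤ K')
    (hK : 3 * ε ≤ K) {s t : ℝ} (hst : s ≤ t) (hsε : K * (t - s) ≤ 3 * ε / 2) :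
    dist (f s) (f t) = K * (t - s) := by
  have := isRefl_of_metricEnt_subset hε hE
  refine (lipschitzWith_iff_forall_le.1 hf s t hst).antisymm (not_lt.1 fun hlt => ?_)
  have hrot₀ : f (s + 0) = f (s + 1) := by rw [add_zero, hper s]
  have hts : t - s ≤ 1 := by nlinarith
  obtain ⟨K', ⟨g, hg, hg₀, hgf⟩, hK'⟩ := hX.exists_mem_freeClassLipschitzConstants_lt hε hE
    (lipschitzWith_comp_const_add hf s) hrot₀ ⟨sub_nonneg.2 hst, hts⟩ hsε (by simpa using hlt)
  have hrotate := CurveFreelyEHomotopic.rotate hε hE hf hper s 0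
  simp only [zero_add] at hrotate
  have hgf' := hgf.trans hrotate hrot₀ (by simpa using (hper 0).symm)
  exact (hmin K' ⟨g, hg, hg₀, hgf'⟩).not_gt hK'

theorem eVariationOn_eq_dist_of_forall_dist_eq {κ : ℝ} (hf : LipschitzWith K f) (hK : 0 < K)
    (hκ : 0 < κ) (hloc : ∀ s t, s ≤ t → K * (t - s) ≤ κ → dist (f s) (f t) = K * (t - s))
    {s t : ℝ} (hst : s ≤ t) (hle : eVariationOn f (Icc s t) ≤ ENNReal.ofReal κ) :
    eVariationOn f (Icc s t) = ENNReal.ofReal (dist (f s) (f t)) := by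
  have hK' : (0 : ℝ) < K := hK
  have harc {r u : ℝ} (hru : r ≤ u) (h : K * (u - r) ≤ κ) :
      ENNReal.ofReal (K * (u - r)) ≤ eVariationOn f (Icc r u) := by
    rw [← hloc r u hru h, ← edist_dist]
    exact edist_le_eVariationOn_Icc f hru
  rcases le_or_gt (K * (t - s)) κ with hshort | hlong
  · refine le_antisymm ?_ (by rw [hloc s t hst hshort]; exact harc hst hshort)
    rw [hloc s t hst hshort, ENNReal.ofReal_mul K.coe_nonneg, ENNReal.ofReal_coe_nnreal]
    exact eVariationOn_le_of_lipschitzOnWith hf.lipschitzOnWith hst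
  obtain ⟨r, hr⟩ : ∃ r, K * (r - s) = κ := ⟨s + κ / K, by field_simp; ring⟩
  have hsr : s < r := by nlinarith
  have hrt : r < t := by nlinarith
  obtain ⟨u, hru, hut, huκ⟩ : ∃ u, r < u ∧ u ≤ t ∧ K * (u - r) ≤ κ := by
    refine ⟨min t (r + (r - s)), lt_min hrt (by linarith), min_le_left _ _, ?_⟩
    rw [← hr]
    exact mul_le_mul_of_nonneg_left (sub_le_iff_le_add'.2 (min_le_right ..)) hK'.le
  refine absurd hle (not_le.2 ?_)
  calc ENNReal.ofReal κ < ENNReal.ofReal (K * (r - s) + K * (u - r)) :=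
        ENNReal.ofReal_lt_ofReal_iff'.2 ⟨by nlinarith, by nlinarith⟩
    _ = ENNReal.ofReal (K * (r - s)) + ENNReal.ofReal (K * (u - r)) :=
        ENNReal.ofReal_add (by nlinarith) (by nlinarith)
    _ ≤ eVariationOn f (Icc s r) + eVariationOn f (Icc r u) :=
        add_le_add (harc hsr.le hr.le) (harc hru.le huκ)
    _ = eVariationOn f (Icc s u) := eVariationOn_Icc_add_Icc f hsr.le hru.le
    _ ≤ eVariationOn f (Icc s t) := eVariationOn.mono f (Icc_subset_Icc_right hut)

theorem IsGeodesicSpace.isClosedKGeodesic_of_eVariationOn_eq_sInf [SetRel.IsSymm E]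
    (hX : IsGeodesicSpace X) (hε : 0 < ε) (hE : MetricEnt X ε ⊆ E)
    (hcont : ContinuousOn c (Icc 0 1)) (hc : c 0 = c 1) (hnull : ¬IsFreelyENull E c)
    (hf₀ : f 0 = f 1) (hf : PropToArclength f) (hfc : CurveFreelyEHomotopic E f c)
    (hlen : eVariationOn f (Icc 0 1) = sInf (freeClassLengths E c)) :
    IsClosedKGeodesic f (3 * ε / 2) := by
  have := isRefl_of_metricEnt_subset hε hE
  obtain ⟨K₀, hK₀⟩ := hX.freeClassLipschitzConstants_nonempty hε hE hcont hc
  obtain ⟨K, hK⟩ : ∃ K : ℝ≥0, eVariationOn f (Icc 0 1) = K :=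
    ⟨_, (ENNReal.coe_toNNReal
      (ne_top_of_le_ne_top ENNReal.coe_ne_top (hlen.trans_le (sInf_freeClassLengths_le hK₀)))).symm⟩
  set F : ℝ → X := fun t => f (Int.fract t) with hF
  have hFK : LipschitzWith K F := lipschitzWith_comp_fract (hf.lipschitzOnWith hK) hf₀
  have hF₀ : F 0 = F 1 := by simp [hF]
  have hFc : CurveFreelyEHomotopic E F c := hfc.congr_left (eqOn_comp_fract hf₀)
  have hmin : ∀ K' ∈ freeClassLipschitzConstants E F, K ≤ K' := by
    rintro K' ⟨g, hg, hg₀, hgF⟩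
    rw [← ENNReal.coe_le_coe, ← hK, hlen]
    exact sInf_freeClassLengths_le ⟨g, hg, hg₀, hgF.trans hFc hF₀ hc⟩
  have hK3 : 3 * ε ≤ K := by
    refine not_lt.1 fun hlt => hnull ?_
    obtain ⟨x, hx⟩ := (isFreelyENull_iff hF₀).1 (isFreelyENull_of_lipschitzWith hE hFK hF₀ hlt)
    exact (isFreelyENull_iff hc).2 ⟨x, hx.trans hFc hF₀ hc⟩
  refine ⟨hf₀, fun s t hst hle => ?_⟩
  refine eVariationOn_eq_dist_of_forall_dist_eq hFK ?_ (by positivity) ?_ hst hle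
  · exact NNReal.coe_pos.1 (by linarith)
  · exact fun s t => hX.dist_eq_of_forall_le hε hE hFK (fun t => by simp [hF]) hmin hK3

end ClosedGeodesic

theorem shortest_in_free_class_general [CompactSpace X] (hgeo : IsGeodesicSpace X)
    (E : Set (X × X)) (hE : IsEntourage E) (c : ℝ → X)
    (hc : ContinuousOn c (Set.Icc 0 1)) (hcl : c 0 = c 1) :
    (∃ cbar : ℝ → X, ContinuousOn cbar (Icc 0 1) ∧ cbar 0 = cbar 1 ∧
      PropToArclength cbar ∧ CurveFreelyEHomotopic E cbar c ∧
      eVariationOn cbar (Icc 0 1) = sInf (freeClassLengths E c)) ∧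
    (∀ cbar : ℝ → X, cbar 0 = cbar 1 → PropToArclength cbar → CurveFreelyEHomotopic E cbar c →
      eVariationOn cbar (Icc 0 1) = sInf (freeClassLengths E c) →
      (((∃ s ∈ Icc (0 : ℝ) 1, ∃ t ∈ Icc (0 : ℝ) 1, cbar s ≠ cbar t) ↔ ¬IsFreelyENull E c) ∧
        ((∃ s ∈ Icc (0 : ℝ) 1, ∃ t ∈ Icc (0 : ℝ) 1, cbar s ≠ cbar t) →
          ∀ ε > 0, MetricEnt X ε ⊆ E → IsClosedKGeodesic cbar (3 * ε / 2)))) := by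
  have := hE.isSymm
  obtain ⟨ε₀, hε₀, hE₀⟩ := hE.2
  have := isRefl_of_metricEnt_subset hε₀ hE₀
  refine ⟨hgeo.exists_propToArclength_eVariationOn_eq_sInf hε₀ hE₀ hc hcl,
    fun cbar hcbar hprop hfree hlen => ?_⟩
  have hnonconst : (∃ s ∈ Icc (0 : ℝ) 1, ∃ t ∈ Icc (0 : ℝ) 1, cbar s ≠ cbar t) ↔
      ¬IsFreelyENull E c := by
    rw [isFreelyENull_iff_forall_eq hcl hfree hlen]
    push Not
    rfl
  exact ⟨hnonconst, fun hne ε hε hεE => hgeo.isClosedKGeodesic_of_eVariationOn_eq_sInf hε hεE hc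
    hcl (hnonconst.1 hne) hcbar hprop hfree hlen⟩

/-- in a compact geodesic space with chained entourage `E`, every closed
curve `c` has a shortest closed curve `c̄` in its free `E`-homotopy class; any such `c̄`
is non-constant iff `c` is not freely `E`-null, and a non-constant such `c̄` is a closed
`(3ε/2)`-geodesic whenever `E_ε ⊆ E`. -/
theorem shortest_in_free_class [CompactSpace X] (hgeo : IsGeodesicSpace X)
    (E : Set (X × X)) (hE : IsChained E) (c : ℝ → X)
    (hc : ContinuousOn c (Set.Icc 0 1)) (hcl : c 0 = c 1) :
    (∃ cbar : ℝ → X, ContinuousOn cbar (Set.Icc 0 1) ∧ cbar 0 = cbar 1 ∧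
      PropToArclength cbar ∧ CurveFreelyEHomotopic E cbar c ∧
      eVariationOn cbar (Set.Icc 0 1) =
        sInf {L : ℝ≥0∞ | ∃ f : ℝ → X, ContinuousOn f (Set.Icc 0 1) ∧ f 0 = f 1 ∧
          CurveFreelyEHomotopic E f c ∧ eVariationOn f (Set.Icc 0 1) = L}) ∧
    (∀ cbar : ℝ → X, ContinuousOn cbar (Set.Icc 0 1) → cbar 0 = cbar 1 →
      PropToArclength cbar → CurveFreelyEHomotopic E cbar c →
      eVariationOn cbar (Set.Icc 0 1) =
        sInf {L : ℝ≥0∞ | ∃ f : ℝ → X, ContinuousOn f (Set.Icc 0 1) ∧ f 0 = f 1 ∧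
          CurveFreelyEHomotopic E f c ∧ eVariationOn f (Set.Icc 0 1) = L} →
      (((∃ s ∈ Set.Icc (0:ℝ) 1, ∃ t ∈ Set.Icc (0:ℝ) 1, cbar s ≠ cbar t) ↔
          ¬ ∃ l : List X, IsSubdivision E c l ∧ ∃ x : X, FreelyEHomotopic E l [x]) ∧
        ((∃ s ∈ Set.Icc (0:ℝ) 1, ∃ t ∈ Set.Icc (0:ℝ) 1, cbar s ≠ cbar t) →
          ∀ ε > 0, MetricEnt X ε ⊆ E → IsClosedKGeodesic cbar (3 * ε / 2)))) :=
  let ⟨hex, hall⟩ := shortest_in_free_class_general hgeo E hE.1 c hc hcl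
  ⟨hex, fun cbar _ => hall cbar⟩
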